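/- For a polyomino P with the property that copies of P placed on the integer grid can meet in only finitely many ways, the problem of whether P can be surrounded by copies of itself is decidable: there is an algorithm that determines whether a surround of P exists. -/

import Mathlib

/-!
The existence of a surround is reduced to a finite search whose test is primitive recursive.

Geometry. If the interior of a finite union of cells meets a closed cell, that cell belongs to the
union (`mem_of_mem_interior_realize`). Hence disjointness of interiors is disjointness of sets of
cells, and `S` lies in the interior of `S ∪ ⋃₀ Q` exactly when every cell of the `3 × 3`
neighbourhood of each cell of `P` is covered. A grid isometry carries centres of cells to centres of
cells, so it acts on `ℤ²` preserving distances, and thus acts as one of the eight lattice symmetries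
followed by a translation (`GridIso.exists_act`); conversely every such map comes from a grid
isometry (`exists_gridIso`).

Finiteness. A copy of `P` containing a given neighbour `n` of `P` is determined by a lattice symmetry
and the cell of `P` carried to `n`, so there are finitely many such copies, listed by `cands`. The
members of a surround that contain a neighbour of `P` already cover all neighbours. Conversely, a
copy that avoids `P` and contains a neighbour of `P` touches the frontier of `P`. So a surround exists
if and only if some subfamily of `cands` is `Good`: compatible, disjoint from `P` and covering
(`hasSurround_iff`).

Computability. `Good`, `cands` and the enumeration of subfamilies are primitive recursive in the list
of cells, which is primitive recursive in the code of the finite set (`primrec_cellList`), and so the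
search is primitive recursive (`primrecPred_search`).
-/

open Set Metric

/-- The Euclidean plane. -/
abbrev Plane := EuclideanSpace ℝ (Fin 2)

/-- `t` is a congruent copy of `S`: the image of `S` under an isometry of the plane. -/
def IsCopy (S t : Set Plane) : Prop := ∃ f : Plane ≃ᵢ Plane, t = f '' S

/-- A shape: a compact topological disk in the plane. -/
def IsShape (S : Set Plane) : Prop :=
  IsCompact S ∧ Nonempty (S ≃ₜ (closedBall (0 : Plane) 1 : Set Plane))

/-- Tiles have pairwise disjoint interiors. -/
def PairwiseDisjointInteriors (T : Set (Set Plane)) : Prop :=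
  ∀ t ∈ T, ∀ u ∈ T, t ≠ u → interior t ∩ interior u = ∅

/-- A tiling of the plane by copies of the shape `S`. -/
def IsTiling (S : Set Plane) (T : Set (Set Plane)) : Prop :=
  T.Countable ∧ (∀ t ∈ T, IsCopy S t) ∧ ⋃₀ T = univ ∧ PairwiseDisjointInteriors T

/-- Invariance of a tiling under translation by `v`. -/
def TransInv (T : Set (Set Plane)) (v : Plane) : Prop :=
  (fun t => (fun p => p + v) '' t) '' T = T

/-- A tiling is periodic if it is invariant under two linearly independent translations. -/
def IsPeriodic (T : Set (Set Plane)) : Prop :=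
  ∃ v w : Plane, LinearIndependent ℝ ![v, w] ∧ TransInv T v ∧ TransInv T w

/-- `f` is a symmetry of the tiling `T`. -/
def IsSymmetry (T : Set (Set Plane)) (f : Plane ≃ᵢ Plane) : Prop :=
  (fun t => f '' t) '' T = T

/-- The closed unit cell of the integer grid with lower-left corner `c`. -/
def cell (c : ℤ × ℤ) : Set Plane :=
  {p | p 0 ∈ Icc (c.1 : ℝ) (c.1 + 1) ∧ p 1 ∈ Icc (c.2 : ℝ) (c.2 + 1)}

/-- The realization of a finite set of grid cells as a subset of the plane. -/
def realize (P : Finset (ℤ × ℤ)) : Set Plane := ⋃ c ∈ P, cell c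

/-- An isometry of the plane mapping the grid to itself (cells to cells). -/
def GridIso (f : Plane ≃ᵢ Plane) : Prop := ∀ c : ℤ × ℤ, ∃ c', f '' cell c = cell c'

/-- A grid-aligned copy of `S`. -/
def IsGridCopy (S t : Set Plane) : Prop := ∃ f : Plane ≃ᵢ Plane, GridIso f ∧ t = f '' S

/-- Edge-adjacency of grid cells. -/
def Adj (c d : ℤ × ℤ) : Prop := (c.1 - d.1).natAbs + (c.2 - d.2).natAbs = 1

/-- A polyomino: a nonempty finite edge-connected set of grid cells. -/
def IsPolyomino (P : Finset (ℤ × ℤ)) : Prop :=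
  P.Nonempty ∧ ∀ c ∈ P, ∀ d ∈ P,
    Relation.ReflTransGen (fun x y => x ∈ P ∧ y ∈ P ∧ Adj x y) c d

/-- A tiling of the plane by grid-aligned copies of the polyomino `P`. -/
def IsGridTiling (P : Finset (ℤ × ℤ)) (T : Set (Set Plane)) : Prop :=
  T.Countable ∧ (∀ t ∈ T, IsGridCopy (realize P) t) ∧ ⋃₀ T = univ ∧
    PairwiseDisjointInteriors T

/-- A surround of the polyomino `P` by grid-aligned copies of itself. -/
def GridSurrounds (S : Set Plane) (Q : Set (Set Plane)) : Prop :=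
  Q.Finite ∧ (∀ p ∈ Q, IsGridCopy S p) ∧ (∀ p ∈ Q, interior p ∩ interior S = ∅) ∧
    PairwiseDisjointInteriors Q ∧ S ⊆ interior (S ∪ ⋃₀ Q) ∧
    ∀ p ∈ Q, (frontier p ∩ frontier S).Nonempty

/-- `P` can be surrounded by grid-aligned copies of itself. -/
def HasSurround (P : Finset (ℤ × ℤ)) : Prop := ∃ Q, GridSurrounds (realize P) Q

/-! ### Codes of finite sets of cells and of integers -/

open Encodable in
/-- A listing of the elements of a finite set of cells, read off from its code for the `Denumerable`
instance (`Finset.encodable` is a different encoding). The code of a finite set is the code of the list of gaps between the increasing codes of its elements, and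
`Denumerable.raise'` turns the gaps back into codes. -/
def cellList (P : Finset (ℤ × ℤ)) : List (ℤ × ℤ) :=
  (Denumerable.raise' ((decode (α := List ℕ) (@encode _ Primcodable.toEncodable P)).getD []) 0).map
    fun n => (decode (α := ℤ × ℤ) n).getD (0, 0)

theorem mem_cellList (P : Finset (ℤ × ℤ)) (c : ℤ × ℤ) : c ∈ cellList P ↔ c ∈ P := by
  obtain ⟨n, rfl⟩ : ∃ n, P = Denumerable.ofNat (Finset (ℤ × ℤ)) n :=
    ⟨@Encodable.encode _ Primcodable.toEncodable P, (Denumerable.ofNat_encode P).symm⟩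
  have h : Denumerable.ofNat (Finset (ℤ × ℤ)) n =
      Finset.map (Denumerable.eqv (ℤ × ℤ)).symm.toEmbedding
        (Denumerable.raise'Finset (Denumerable.ofNat (List ℕ) n) 0) := rfl
  have he : @Encodable.encode _ Primcodable.toEncodable
      (Denumerable.ofNat (Finset (ℤ × ℤ)) n) = n := Denumerable.encode_ofNat n
  unfold cellList
  rw [he, Denumerable.decode_eq_ofNat, h]
  simp only [Option.getD_some, List.mem_map, Finset.mem_map, Denumerable.decode_eq_ofNat]
  rfl

/-- The code of `n ≥ 0` is `2 * n` and that of `-(n + 1)` is `2 * n + 1`; integer addition is primitive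
recursive through the positive and negative parts, which are read off from the code. -/
theorem primrec_toNat : Primrec Int.toNat := by
  have h : Primrec fun z : ℤ => if Encodable.encode z % 2 = 0 then Encodable.encode z / 2 else 0 :=
    Primrec.ite (Primrec.eq.comp (Primrec.nat_mod.comp Primrec.encode (Primrec.const 2))
      (Primrec.const 0)) (Primrec.nat_div.comp Primrec.encode (Primrec.const 2)) (Primrec.const 0)
  refine h.of_eq fun z => ?_
  rcases z with n | n
  · have : Encodable.encode (Int.ofNat n) = 2 * n := rfl
    rw [this, if_pos (by omega)]
    simp
  · have : Encodable.encode (Int.negSucc n) = 2 * n + 1 := rfl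
    rw [this, if_neg (by omega)]
    simp

theorem primrec_negToNat : Primrec fun z : ℤ => (-z).toNat := by
  have h : Primrec fun z : ℤ => if Encodable.encode z % 2 = 0 then 0
      else Encodable.encode z / 2 + 1 :=
    Primrec.ite (Primrec.eq.comp (Primrec.nat_mod.comp Primrec.encode (Primrec.const 2))
      (Primrec.const 0)) (Primrec.const 0)
      (Primrec.succ.comp (Primrec.nat_div.comp Primrec.encode (Primrec.const 2)))
  refine h.of_eq fun z => ?_
  rcases z with n | n
  · have : Encodable.encode (Int.ofNat n) = 2 * n := rfl
    rw [this, if_pos (by omega)]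
    simp
  · have : Encodable.encode (Int.negSucc n) = 2 * n + 1 := rfl
    rw [this, if_neg (by omega), Int.neg_negSucc]
    simp
    omega

theorem primrec_subNat : Primrec₂ fun a b : ℕ => (a : ℤ) - b := by
  have h : Primrec₂ fun a b : ℕ => if b ≤ a then Denumerable.ofNat ℤ (2 * (a - b))
      else Denumerable.ofNat ℤ (2 * (b - a - 1) + 1) :=
    Primrec.ite (Primrec.nat_le.comp Primrec.snd Primrec.fst)
      ((Primrec.ofNat ℤ).comp (Primrec.nat_mul.comp (Primrec.const 2)
        (Primrec.nat_sub.comp Primrec.fst Primrec.snd)))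
      ((Primrec.ofNat ℤ).comp (Primrec.succ.comp (Primrec.nat_mul.comp (Primrec.const 2)
        (Primrec.nat_sub.comp (Primrec.nat_sub.comp Primrec.snd Primrec.fst) (Primrec.const 1)))))
  refine h.of_eq fun a b => ?_
  split_ifs with hab
  · have : Encodable.encode (Int.ofNat (a - b)) = 2 * (a - b) := rfl
    rw [← this, Denumerable.ofNat_encode]
    simp [Int.ofNat_sub hab]
  · have : Encodable.encode (Int.negSucc (b - a - 1)) = 2 * (b - a - 1) + 1 := rfl
    rw [← this, Denumerable.ofNat_encode]
    omega

theorem primrec_intAdd : Primrec₂ fun a b : ℤ => a + b :=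
  (primrec_subNat.comp
    (Primrec.nat_add.comp (primrec_toNat.comp Primrec.fst) (primrec_toNat.comp Primrec.snd))
    (Primrec.nat_add.comp (primrec_negToNat.comp Primrec.fst)
      (primrec_negToNat.comp Primrec.snd))).of_eq fun p => by
        push_cast; omega

theorem primrec_intNeg : Primrec fun a : ℤ => -a :=
  (primrec_subNat.comp primrec_negToNat primrec_toNat).of_eq fun z => by omega

theorem primrec_cellAdd : Primrec₂ fun a b : ℤ × ℤ => a + b :=
  Primrec.pair (primrec_intAdd.comp (Primrec.fst.comp Primrec.fst) (Primrec.fst.comp Primrec.snd))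
    (primrec_intAdd.comp (Primrec.snd.comp Primrec.fst) (Primrec.snd.comp Primrec.snd))

theorem primrec_cellSub : Primrec₂ fun a b : ℤ × ℤ => a - b :=
  (primrec_cellAdd.comp Primrec.fst (Primrec.pair
    (primrec_intNeg.comp (Primrec.fst.comp Primrec.snd))
    (primrec_intNeg.comp (Primrec.snd.comp Primrec.snd)))).of_eq fun p => by
      ext <;> simp [sub_eq_add_neg]

/-- `Denumerable.raise'` as a left fold whose state is the running offset and the output so far. -/
theorem raise'_eq_foldl (l : List ℕ) (n : ℕ) (acc : List ℕ) :
    (l.foldl (fun s m => (m + s.1 + 1, s.2 ++ [m + s.1])) (n, acc)).2 =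
      acc ++ Denumerable.raise' l n := by
  induction l generalizing n acc with
  | nil => simp [Denumerable.raise']
  | cons m l ih => simp [Denumerable.raise', ih]

theorem primrec_raise' : Primrec fun l : List ℕ => Denumerable.raise' l 0 := by
  have hsum : Primrec₂ fun (_ : List ℕ) (q : (ℕ × List ℕ) × ℕ) => q.2 + q.1.1 :=
    Primrec.nat_add.comp (Primrec.snd.comp Primrec.snd)
      (Primrec.fst.comp (Primrec.fst.comp Primrec.snd))
  have hstep : Primrec₂ fun (_ : List ℕ) (q : (ℕ × List ℕ) × ℕ) =>
      (q.2 + q.1.1 + 1, q.1.2 ++ [q.2 + q.1.1]) :=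
    Primrec.pair (Primrec.succ.comp hsum)
      (Primrec.list_concat.comp (Primrec.snd.comp (Primrec.fst.comp Primrec.snd)) hsum)
  refine (Primrec.snd.comp (Primrec.list_foldl (h := fun (_ : List ℕ) q =>
    (q.2 + q.1.1 + 1, q.1.2 ++ [q.2 + q.1.1])) Primrec.id
    (Primrec.const ((0 : ℕ), ([] : List ℕ))) hstep)).of_eq fun l => ?_
  simpa using raise'_eq_foldl l 0 []

theorem primrec_cellList : Primrec cellList :=
  Primrec.list_map
    (primrec_raise'.comp (Primrec.option_getD.comp (Primrec.decode.comp Primrec.encode)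
      (Primrec.const [])))
    (Primrec.option_getD.comp (Primrec.decode.comp Primrec.snd) (Primrec.const (0, 0)))

/-! ### Bounded quantifiers and sublists -/

theorem PrimrecPred.bforall {α β : Type*} [Primcodable α] [Primcodable β] {l : α → List β}
    {R : β → α → Prop} (hl : Primrec l) (hR : PrimrecRel R) :
    PrimrecPred fun a => ∀ b ∈ l a, R b a :=
  hR.forall_mem_list.comp hl Primrec.id

theorem PrimrecPred.bexists {α β : Type*} [Primcodable α] [Primcodable β] {l : α → List β}
    {R : β → α → Prop} (hl : Primrec l) (hR : PrimrecRel R) :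
    PrimrecPred fun a => ∃ b ∈ l a, R b a :=
  hR.exists_mem_list.comp hl Primrec.id

theorem primrecRel_mem : PrimrecRel fun (x : ℤ × ℤ) (l : List (ℤ × ℤ)) => x ∈ l :=
  ((Primrec.eq (α := ℤ × ℤ)).exists_mem_list.swap).of_eq fun x l => by simp

theorem primrec_sublists' {α : Type*} [Primcodable α] : Primrec (List.sublists' (α := α)) := by
  refine (Primrec.list_foldr (h := fun (_ : List α) (q : α × List (List α)) =>
    q.2 ++ q.2.map (List.cons q.1)) Primrec.id (Primrec.const [[]])
    (Primrec.list_append.comp (Primrec.snd.comp Primrec.snd)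
      (Primrec.list_map (Primrec.snd.comp Primrec.snd)
        (Primrec.list_cons.comp (Primrec.fst.comp (Primrec.snd.comp Primrec.fst))
          Primrec.snd)))).of_eq fun l => ?_
  induction l with
  | nil => rfl
  | cons a l ih =>
    simp only [id_eq, List.foldr_cons] at ih ⊢
    rw [ih, List.sublists'_cons]

/-! ### The search and its primitive recursiveness -/

/-- The symmetry of the square lattice fixing the origin with index `g`: an exchange of the two
coordinates (if the first entry is `true`), followed by a change of sign of either coordinate. -/
def act (g : Bool × Bool × Bool) (x : ℤ × ℤ) : ℤ × ℤ :=
  let y := if g.1 = true then (x.2, x.1) else x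
  (if g.2.1 = true then -y.1 else y.1, if g.2.2 = true then -y.2 else y.2)

/-- The indices of the eight symmetries. -/
def syms : List (Bool × Bool × Bool) :=
  [(false, false, false), (false, false, true), (false, true, false), (false, true, true),
    (true, false, false), (true, false, true), (true, true, false), (true, true, true)]

theorem mem_syms (g : Bool × Bool × Bool) : g ∈ syms := by
  revert g; decide

/-- The displacements from a cell to the nine cells of its `3 × 3` neighbourhood. -/
def offsets : List (ℤ × ℤ) :=
  [(-1, -1), (-1, 0), (-1, 1), (0, -1), (0, 0), (0, 1), (1, -1), (1, 0), (1, 1)]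

theorem mem_offsets (d : ℤ × ℤ) :
    d ∈ offsets ↔ (-1 ≤ d.1 ∧ d.1 ≤ 1) ∧ (-1 ≤ d.2 ∧ d.2 ≤ 1) := by
  obtain ⟨i, j⟩ := d
  constructor
  · intro h
    simp only [offsets, List.mem_cons, Prod.mk.injEq, List.not_mem_nil, or_false] at h
    omega
  · rintro ⟨⟨h1, h2⟩, h3, h4⟩
    simp only at h1 h2 h3 h4
    interval_cases i <;> interval_cases j <;> simp [offsets]

/-- All cells sharing at least a corner with a cell of `L`. -/
def nbrs (L : List (ℤ × ℤ)) : List (ℤ × ℤ) :=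
  L.flatMap fun c => offsets.map fun d => c + d

/-- The copies of `L` that contain a prescribed neighbour `n`: choose a symmetry `g` and the cell
`c` of `L` that is to be carried to `n`. -/
def cands (L : List (ℤ × ℤ)) : List (List (ℤ × ℤ)) :=
  syms.flatMap fun g => L.flatMap fun c => (nbrs L).map fun n =>
    L.map fun x => act g x + (n - act g c)

/-- The family `F` of cell lists surrounds `L` combinatorially: its members avoid `L`, two members
with a common cell have the same cells, and every neighbour of `L` is covered. -/
def Good (L : List (ℤ × ℤ)) (F : List (List (ℤ × ℤ))) : Prop :=
  (∀ a ∈ F, ∀ x ∈ a, x ∉ L) ∧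
  (∀ a ∈ F, ∀ b ∈ F, (∃ x ∈ a, x ∈ b) → ∀ x ∈ a, x ∈ b) ∧
  ∀ n ∈ nbrs L, n ∈ L ∨ ∃ a ∈ F, n ∈ a

theorem primrec_act : Primrec₂ act := by
  have hy : Primrec fun p : (Bool × Bool × Bool) × (ℤ × ℤ) =>
      if p.1.1 = true then (p.2.2, p.2.1) else p.2 :=
    Primrec.ite (Primrec.eq.comp (Primrec.fst.comp Primrec.fst) (Primrec.const true))
      (Primrec.pair (Primrec.snd.comp Primrec.snd) (Primrec.fst.comp Primrec.snd)) Primrec.snd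
  exact Primrec.pair
    (Primrec.ite (Primrec.eq.comp (Primrec.fst.comp (Primrec.snd.comp Primrec.fst))
      (Primrec.const true)) (primrec_intNeg.comp (Primrec.fst.comp hy)) (Primrec.fst.comp hy))
    (Primrec.ite (Primrec.eq.comp (Primrec.snd.comp (Primrec.snd.comp Primrec.fst))
      (Primrec.const true)) (primrec_intNeg.comp (Primrec.snd.comp hy)) (Primrec.snd.comp hy))

theorem primrec_nbrs : Primrec nbrs :=
  Primrec.list_flatMap Primrec.id (Primrec.list_map (Primrec.const offsets)
    (primrec_cellAdd.comp (Primrec.snd.comp Primrec.fst) Primrec.snd))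

theorem primrec_cands : Primrec cands := by
  have h1 : Primrec₂ fun (p : ((List (ℤ × ℤ) × Bool × Bool × Bool) × ℤ × ℤ) × ℤ × ℤ)
      (x : ℤ × ℤ) => act p.1.1.2 x + (p.2 - act p.1.1.2 p.1.2) :=
    primrec_cellAdd.comp
      (primrec_act.comp (Primrec.snd.comp (Primrec.fst.comp (Primrec.fst.comp Primrec.fst)))
        Primrec.snd)
      (primrec_cellSub.comp (Primrec.snd.comp Primrec.fst)
        (primrec_act.comp (Primrec.snd.comp (Primrec.fst.comp (Primrec.fst.comp Primrec.fst)))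
          (Primrec.snd.comp (Primrec.fst.comp Primrec.fst))))
  exact Primrec.list_flatMap (Primrec.const syms)
    (Primrec.list_flatMap (f := fun q : List (ℤ × ℤ) × Bool × Bool × Bool => q.1)
      Primrec.fst
      (Primrec.list_map (f := fun q : (List (ℤ × ℤ) × Bool × Bool × Bool) × ℤ × ℤ => nbrs q.1.1)
        (primrec_nbrs.comp (Primrec.fst.comp Primrec.fst))
        (Primrec.list_map
          (f := fun q : ((List (ℤ × ℤ) × Bool × Bool × Bool) × ℤ × ℤ) × ℤ × ℤ => q.1.1.1)
          (Primrec.fst.comp (Primrec.fst.comp Primrec.fst)) h1)))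

theorem primrecRel_good : PrimrecRel Good := by
  refine PrimrecPred.and ?_ (PrimrecPred.and ?_ ?_)
  · refine PrimrecPred.bforall (R := fun a (p : List (ℤ × ℤ) × List (List (ℤ × ℤ))) =>
      ∀ x ∈ a, x ∉ p.1) Primrec.snd ?_
    refine PrimrecPred.bforall (l := fun q : List (ℤ × ℤ) × List (ℤ × ℤ) × List (List (ℤ × ℤ)) =>
      q.1) (R := fun x q => x ∉ q.2.1) Primrec.fst ?_
    exact (primrecRel_mem.comp Primrec.fst
      (Primrec.fst.comp (Primrec.snd.comp Primrec.snd))).not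
  · have hsub : PrimrecRel fun a b : List (ℤ × ℤ) => ∀ x ∈ a, x ∈ b :=
      primrecRel_mem.forall_mem_list
    have hmeet : PrimrecRel fun a b : List (ℤ × ℤ) => ∃ x ∈ a, x ∈ b :=
      primrecRel_mem.exists_mem_list
    have himp : PrimrecRel fun b a : List (ℤ × ℤ) => (∃ x ∈ a, x ∈ b) → ∀ x ∈ a, x ∈ b :=
      ((hmeet.comp Primrec.snd Primrec.fst).not.or (hsub.comp Primrec.snd Primrec.fst)).of_eq
        fun p => imp_iff_not_or.symm
    refine PrimrecPred.bforall (R := fun a (p : List (ℤ × ℤ) × List (List (ℤ × ℤ))) =>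
      ∀ b ∈ p.2, (∃ x ∈ a, x ∈ b) → ∀ x ∈ a, x ∈ b) Primrec.snd ?_
    exact PrimrecPred.bforall (l := fun q : List (ℤ × ℤ) × List (ℤ × ℤ) × List (List (ℤ × ℤ)) =>
      q.2.2) (R := fun b q => (∃ x ∈ q.1, x ∈ b) → ∀ x ∈ q.1, x ∈ b)
      (Primrec.snd.comp Primrec.snd) (himp.comp Primrec.fst (Primrec.fst.comp Primrec.snd))
  · refine PrimrecPred.bforall (l := fun p : List (ℤ × ℤ) × List (List (ℤ × ℤ)) => nbrs p.1)
      (R := fun n p => n ∈ p.1 ∨ ∃ a ∈ p.2, n ∈ a) (primrec_nbrs.comp Primrec.fst) ?_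
    refine PrimrecPred.or (primrecRel_mem.comp Primrec.fst (Primrec.fst.comp Primrec.snd)) ?_
    exact PrimrecPred.bexists (l := fun q : (ℤ × ℤ) × List (ℤ × ℤ) × List (List (ℤ × ℤ)) => q.2.2)
      (R := fun a q => q.1 ∈ a) (Primrec.snd.comp Primrec.snd)
      (primrecRel_mem.comp (Primrec.fst.comp Primrec.snd) Primrec.fst)

/-- The criterion to be tested by the algorithm: an exhaustive search over families of candidates. -/
theorem primrecPred_search : PrimrecPred fun P : Finset (ℤ × ℤ) =>
    ∃ F ∈ (cands (cellList P)).sublists', Good (cellList P) F :=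
  PrimrecPred.bexists (R := fun F P => Good (cellList P) F)
    (primrec_sublists'.comp (primrec_cands.comp primrec_cellList))
    (primrecRel_good.comp (primrec_cellList.comp Primrec.snd) Primrec.fst)

/-! ### Topology of unions of cells -/

/-- The open unit cell with lower-left corner `c`. -/
def openCell (c : ℤ × ℤ) : Set Plane :=
  {p | p 0 ∈ Ioo (c.1 : ℝ) (c.1 + 1) ∧ p 1 ∈ Ioo (c.2 : ℝ) (c.2 + 1)}

/-- The centre of the cell `c`. -/
noncomputable def cellCenter (c : ℤ × ℤ) : Plane := !₂[(c.1 : ℝ) + 1 / 2, (c.2 : ℝ) + 1 / 2]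

theorem continuous_coord (i : Fin 2) : Continuous fun p : Plane => p i := by fun_prop

theorem isOpen_openCell (c : ℤ × ℤ) : IsOpen (openCell c) :=
  (isOpen_Ioo.preimage (continuous_coord 0)).inter (isOpen_Ioo.preimage (continuous_coord 1))

theorem isClosed_cell (c : ℤ × ℤ) : IsClosed (cell c) :=
  (isClosed_Icc.preimage (continuous_coord 0)).inter (isClosed_Icc.preimage (continuous_coord 1))

theorem openCell_subset_cell (c : ℤ × ℤ) : openCell c ⊆ cell c :=
  fun _ h => ⟨Ioo_subset_Icc_self h.1, Ioo_subset_Icc_self h.2⟩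

theorem center_mem_openCell (c : ℤ × ℤ) : cellCenter c ∈ openCell c := by
  simp [cellCenter, openCell]; norm_num

theorem eq_of_mem_openCell_of_mem_cell {c d : ℤ × ℤ} {p : Plane} (hc : p ∈ openCell c)
    (hd : p ∈ cell d) : c = d := by
  obtain ⟨⟨h1, h2⟩, h3, h4⟩ := hc
  obtain ⟨⟨k1, k2⟩, k3, k4⟩ := hd
  have a1 : (c.1 : ℝ) < d.1 + 1 := by linarith
  have a2 : (d.1 : ℝ) < c.1 + 1 := by linarith
  have a3 : (c.2 : ℝ) < d.2 + 1 := by linarith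
  have a4 : (d.2 : ℝ) < c.2 + 1 := by linarith
  norm_cast at a1 a2 a3 a4
  ext <;> omega

theorem cell_subset_closure_openCell (c : ℤ × ℤ) : cell c ⊆ closure (openCell c) := by
  intro p hp
  obtain ⟨⟨h1, h2⟩, h3, h4⟩ := hp
  -- approach `p` along the segment from the centre of the cell
  have ht : Filter.Tendsto (fun t : ℝ => p + t • (cellCenter c - p)) (nhdsWithin 0 (Ioo 0 1))
      (nhds p) := by
    have : Continuous fun t : ℝ => p + t • (cellCenter c - p) := by fun_prop
    simpa using (this.tendsto 0).mono_left nhdsWithin_le_nhds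
  have : (nhdsWithin (0 : ℝ) (Ioo 0 1)).NeBot := by
    rw [← mem_closure_iff_nhdsWithin_neBot, closure_Ioo (by norm_num)]
    simp
  refine mem_closure_of_tendsto ht ?_
  filter_upwards [self_mem_nhdsWithin] with t ht
  obtain ⟨t0, t1⟩ := ht
  simp only [openCell, cellCenter, mem_ofPred_eq, mem_Ioo, PiLp.add_apply, PiLp.smul_apply,
    PiLp.sub_apply, smul_eq_mul, Matrix.cons_val_zero, Matrix.cons_val_one]
  refine ⟨⟨?_, ?_⟩, ?_, ?_⟩ <;> nlinarith

theorem mem_realize {P : Finset (ℤ × ℤ)} {p : Plane} : p ∈ realize P ↔ ∃ c ∈ P, p ∈ cell c := by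
  simp [realize]

theorem cell_subset_realize {P : Finset (ℤ × ℤ)} {c : ℤ × ℤ} (h : c ∈ P) : cell c ⊆ realize P :=
  fun _ hp => mem_realize.2 ⟨c, h, hp⟩

theorem isClosed_realize (P : Finset (ℤ × ℤ)) : IsClosed (realize P) :=
  P.finite_toSet.isClosed_biUnion fun c _ => isClosed_cell c

/-- The interior of a union of cells meets only the closed cells of that union. All topological
conditions on surrounds become conditions on cells through this fact. -/
theorem mem_of_mem_interior_realize {B : Finset (ℤ × ℤ)} {c : ℤ × ℤ} {p : Plane}
    (hp : p ∈ interior (realize B)) (hc : p ∈ cell c) : c ∈ B := by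
  obtain ⟨q, hq, hqc⟩ :=
    mem_closure_iff.1 (cell_subset_closure_openCell c hc) _ isOpen_interior hp
  obtain ⟨d, hd, hqd⟩ := mem_realize.1 (interior_subset hq)
  rwa [eq_of_mem_openCell_of_mem_cell hqc hqd]

theorem center_mem_interior_realize {B : Finset (ℤ × ℤ)} {c : ℤ × ℤ} (hc : c ∈ B) :
    cellCenter c ∈ interior (realize B) :=
  interior_maximal ((openCell_subset_cell c).trans (cell_subset_realize hc)) (isOpen_openCell c)
    (center_mem_openCell c)

theorem center_mem_cell (c : ℤ × ℤ) : cellCenter c ∈ cell c :=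
  openCell_subset_cell c (center_mem_openCell c)

theorem interior_realize_inter_eq_empty {A B : Finset (ℤ × ℤ)} :
    interior (realize A) ∩ interior (realize B) = ∅ ↔ ∀ x ∈ A, x ∉ B := by
  rw [eq_empty_iff_forall_notMem]
  constructor
  · exact fun h x hA hB =>
      h _ ⟨center_mem_interior_realize hA, center_mem_interior_realize hB⟩
  · rintro h p ⟨hA, hB⟩
    obtain ⟨a, ha, hpa⟩ := mem_realize.1 (interior_subset hA)
    exact h a ha (mem_of_mem_interior_realize hB hpa)

theorem realize_injective : Function.Injective realize := by
  intro A B h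
  ext c
  constructor <;> intro hc
  · exact mem_of_mem_interior_realize (h ▸ center_mem_interior_realize hc) (center_mem_cell c)
  · exact mem_of_mem_interior_realize (h ▸ center_mem_interior_realize hc) (center_mem_cell c)

theorem exists_mem_cell_inter {c d : ℤ × ℤ} (h : d - c ∈ offsets) : (cell c ∩ cell d).Nonempty := by
  rw [mem_offsets] at h
  simp only [Prod.fst_sub, Prod.snd_sub] at h
  obtain ⟨⟨h1, h2⟩, h3, h4⟩ := h
  refine ⟨!₂[((max c.1 d.1 : ℤ) : ℝ), ((max c.2 d.2 : ℤ) : ℝ)], ⟨⟨?_, ?_⟩, ?_, ?_⟩,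
    ⟨?_, ?_⟩, ?_, ?_⟩ <;> simp <;> norm_cast <;> omega

theorem mem_nbrs {L : List (ℤ × ℤ)} {n : ℤ × ℤ} : n ∈ nbrs L ↔ ∃ c ∈ L, n - c ∈ offsets := by
  simp only [nbrs, List.mem_flatMap, List.mem_map]
  constructor
  · rintro ⟨c, hc, d, hd, rfl⟩
    exact ⟨c, hc, by simpa using hd⟩
  · rintro ⟨c, hc, hd⟩
    exact ⟨c, hc, _, hd, by simp⟩

theorem realize_subset_interior_iff {P B : Finset (ℤ × ℤ)} :
    realize P ⊆ interior (realize B) ↔ ∀ c ∈ P, ∀ n, n - c ∈ offsets → n ∈ B := by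
  constructor
  · intro h c hc n hn
    obtain ⟨p, hpc, hpn⟩ := exists_mem_cell_inter hn
    exact mem_of_mem_interior_realize (h (cell_subset_realize hc hpc)) hpn
  · intro h p hp
    obtain ⟨c, hc, ⟨h1, h2⟩, h3, h4⟩ := mem_realize.1 hp
    -- a neighbourhood of `p` inside the `3 × 3` block around `c`
    have hU : IsOpen {q : Plane | q 0 ∈ Ioo ((c.1 : ℝ) - 1) (c.1 + 2) ∧
        q 1 ∈ Ioo ((c.2 : ℝ) - 1) (c.2 + 2)} :=
      (isOpen_Ioo.preimage (continuous_coord 0)).inter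
        (isOpen_Ioo.preimage (continuous_coord 1))
    refine interior_maximal ?_ hU
      ⟨⟨by linarith, by linarith⟩, by linarith, by linarith⟩
    rintro q ⟨⟨k1, k2⟩, k3, k4⟩
    have e1 := Int.floor_le (q 0)
    have e2 := Int.lt_floor_add_one (q 0)
    have e3 := Int.floor_le (q 1)
    have e4 := Int.lt_floor_add_one (q 1)
    refine mem_realize.2 ⟨(⌊q 0⌋, ⌊q 1⌋), h c hc _ ?_, ⟨e1, e2.le⟩, e3, e4.le⟩
    have b1 : (c.1 : ℝ) - 1 < ⌊q 0⌋ + 1 := by linarith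
    have b2 : (⌊q 0⌋ : ℝ) < c.1 + 2 := by linarith
    have b3 : (c.2 : ℝ) - 1 < ⌊q 1⌋ + 1 := by linarith
    have b4 : (⌊q 1⌋ : ℝ) < c.2 + 2 := by linarith
    norm_cast at b1 b2 b3 b4
    rw [mem_offsets]
    simp only [Prod.fst_sub, Prod.snd_sub]
    omega

/-- Two sets of cells without common cells touch along their frontiers as soon as they contain
neighbouring cells. -/
theorem frontier_inter_nonempty {A P : Finset (ℤ × ℤ)} (hAP : ∀ x ∈ A, x ∉ P) {c n : ℤ × ℤ}
    (hc : c ∈ P) (hn : n ∈ A) (h : n - c ∈ offsets) :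
    (frontier (realize A) ∩ frontier (realize P)).Nonempty := by
  obtain ⟨p, hpc, hpn⟩ := exists_mem_cell_inter h
  refine ⟨p, ?_, ?_⟩
  · rw [(isClosed_realize A).frontier_eq]
    exact ⟨cell_subset_realize hn hpn,
      fun hp => hAP c (mem_of_mem_interior_realize hp hpc) hc⟩
  · rw [(isClosed_realize P).frontier_eq]
    exact ⟨cell_subset_realize hc hpc,
      fun hp => hAP n hn (mem_of_mem_interior_realize hp hpn)⟩

/-! ### Grid isometries -/

theorem exists_gridIso (g : Bool × Bool × Bool) (v : ℤ × ℤ) :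
    ∃ f : Plane ≃ᵢ Plane, GridIso f ∧ ∀ c, f '' cell c = cell (act g c + v) := by
  obtain ⟨s, a, b⟩ := g
  suffices H : ∃ f : Plane ≃ᵢ Plane, ∀ c, f '' cell c = cell (act (s, a, b) c + v) by
    obtain ⟨f, hf⟩ := H
    exact ⟨f, fun c => ⟨_, hf c⟩, hf⟩
  -- the cell `[x, x + 1]` is carried to `[-x, -x + 1]` by `t ↦ 1 - t`
  let r (b : Bool) (t : ℝ) : ℝ := if b = true then 1 - t else t
  let e : Plane ≃ Plane :=
    { toFun := fun p => !₂[r a (if s = true then p 1 else p 0) + v.1,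
        r b (if s = true then p 0 else p 1) + v.2]
      invFun := fun p => if s = true then !₂[r b (p 1 - v.2), r a (p 0 - v.1)]
        else !₂[r a (p 0 - v.1), r b (p 1 - v.2)]
      left_inv := by
        intro p
        ext i
        cases s <;> cases a <;> cases b <;> fin_cases i <;> simp [r]
      right_inv := by
        intro p
        ext i
        cases s <;> cases a <;> cases b <;> fin_cases i <;> simp [r] }
  have he : Isometry e := by
    refine Isometry.of_dist_eq fun p q => ?_
    simp only [EuclideanSpace.dist_eq, Fin.sum_univ_two, Real.dist_eq, sq_abs]
    congr 1
    cases s <;> cases a <;> cases b <;> simp [e, r] <;> ring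
  refine ⟨⟨e, he⟩, fun c => ?_⟩
  ext p
  change p ∈ e '' cell c ↔ _
  rw [e.image_eq_preimage_symm]
  cases s <;> cases a <;> cases b <;>
    simp [e, r, cell, act] <;> constructor <;> rintro ⟨⟨h1, h2⟩, h3, h4⟩ <;>
    refine ⟨⟨?_, ?_⟩, ?_, ?_⟩ <;> linarith

theorem dist_center_sq (c d : ℤ × ℤ) :
    dist (cellCenter c) (cellCenter d) ^ 2 = (((c.1 - d.1) ^ 2 + (c.2 - d.2) ^ 2 : ℤ) : ℝ) := by
  rw [EuclideanSpace.dist_eq, Real.sq_sqrt (by positivity)]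
  simp [Fin.sum_univ_two, Real.dist_eq, sq_abs, cellCenter]

/-- The centre of a cell is the only point at distance at most `√2 / 2` from the whole cell. -/
theorem eq_center_of_forall_dist {c : ℤ × ℤ} {p : Plane}
    (h : ∀ q ∈ cell c, dist q p ^ 2 ≤ 1 / 2) : p = cellCenter c := by
  have h1 := h !₂[(c.1 : ℝ), (c.2 : ℝ)] (by simp [cell])
  have h2 := h !₂[(c.1 : ℝ) + 1, (c.2 : ℝ) + 1] (by simp [cell])
  rw [EuclideanSpace.dist_eq, Real.sq_sqrt (by positivity)] at h1 h2
  simp [Fin.sum_univ_two, Real.dist_eq, sq_abs] at h1 h2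
  have e0 : (p 0 - (c.1 + 1 / 2)) ^ 2 ≤ 0 := by
    nlinarith [sq_nonneg (p 1 - (c.2 + 1 / 2))]
  have e1 : (p 1 - (c.2 + 1 / 2)) ^ 2 ≤ 0 := by
    nlinarith [sq_nonneg (p 0 - (c.1 + 1 / 2))]
  have e0' := pow_eq_zero_iff (two_ne_zero) |>.1 (le_antisymm e0 (sq_nonneg _))
  have e1' := pow_eq_zero_iff (two_ne_zero) |>.1 (le_antisymm e1 (sq_nonneg _))
  ext i
  fin_cases i
  · simp [cellCenter]; linarith
  · simp [cellCenter]; linarith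

theorem dist_center_sq_le {c : ℤ × ℤ} {q : Plane} (h : q ∈ cell c) :
    dist q (cellCenter c) ^ 2 ≤ 1 / 2 := by
  obtain ⟨⟨h1, h2⟩, h3, h4⟩ := h
  rw [EuclideanSpace.dist_eq, Real.sq_sqrt (by positivity)]
  simp [Fin.sum_univ_two, Real.dist_eq, sq_abs, cellCenter]
  nlinarith

theorem map_center {f : Plane ≃ᵢ Plane} {c c' : ℤ × ℤ} (h : f '' cell c = cell c') :
    f (cellCenter c) = cellCenter c' := by
  refine eq_center_of_forall_dist fun q hq => ?_
  rw [← h] at hq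
  obtain ⟨q, hq, rfl⟩ := hq
  rw [f.dist_eq]
  exact dist_center_sq_le hq

/-- A map of `ℤ²` to itself preserving distances is one of the eight lattice symmetries followed by a
translation. -/
theorem exists_act_of_isometry {φ : ℤ × ℤ → ℤ × ℤ}
    (h : ∀ c d, ((φ c).1 - (φ d).1) ^ 2 + ((φ c).2 - (φ d).2) ^ 2 =
      (c.1 - d.1) ^ 2 + (c.2 - d.2) ^ 2) : ∃ g v, ∀ c, φ c = act g c + v := by
  have key : ∃ s a b : Bool,
      ((φ (1, 0)).1 - (φ 0).1 = (act (s, a, b) (1, 0)).1 ∧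
        (φ (1, 0)).2 - (φ 0).2 = (act (s, a, b) (1, 0)).2) ∧
      ((φ (0, 1)).1 - (φ 0).1 = (act (s, a, b) (0, 1)).1 ∧
        (φ (0, 1)).2 - (φ 0).2 = (act (s, a, b) (0, 1)).2) := by
    have h1 := h (1, 0) 0
    have h2 := h (0, 1) 0
    have h3 := h (1, 0) (0, 1)
    simp only [Prod.fst_zero, Prod.snd_zero] at h1 h2 h3
    generalize hx : (φ (1, 0)).1 - (φ 0).1 = x at *
    generalize hy : (φ (1, 0)).2 - (φ 0).2 = y at *
    generalize hz : (φ (0, 1)).1 - (φ 0).1 = z at *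
    generalize hw : (φ (0, 1)).2 - (φ 0).2 = w at *
    have e1 : (φ (1, 0)).1 - (φ (0, 1)).1 = x - z := by omega
    have e2 : (φ (1, 0)).2 - (φ (0, 1)).2 = y - w := by omega
    rw [e1, e2] at h3
    obtain ⟨xb1, xb2⟩ := abs_le.1 (sq_le_one_iff_abs_le_one (a := x) |>.1
      (by linarith [sq_nonneg y]))
    obtain ⟨yb1, yb2⟩ := abs_le.1 (sq_le_one_iff_abs_le_one (a := y) |>.1
      (by linarith [sq_nonneg x]))
    obtain ⟨zb1, zb2⟩ := abs_le.1 (sq_le_one_iff_abs_le_one (a := z) |>.1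
      (by linarith [sq_nonneg w]))
    obtain ⟨wb1, wb2⟩ := abs_le.1 (sq_le_one_iff_abs_le_one (a := w) |>.1
      (by linarith [sq_nonneg z]))
    -- finitely many integer values remain
    clear hx hy hz hw e1 e2 h
    revert h1 h2 h3
    interval_cases x <;> interval_cases y <;> interval_cases z <;> interval_cases w <;> decide
  obtain ⟨s, a, b, ⟨k1, k2⟩, k3, k4⟩ := key
  refine ⟨(s, a, b), φ 0, fun c => ?_⟩
  have h1 := h c 0
  have h2 := h c (1, 0)
  have h3 := h c (0, 1)
  simp only [Prod.fst_zero, Prod.snd_zero] at h1 h2 h3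
  rw [sub_eq_iff_eq_add] at k1 k2 k3 k4
  rw [k1, k2] at h2
  rw [k3, k4] at h3
  -- inner products with the images of the two unit vectors determine `φ c`
  ext <;> cases s <;> cases a <;> cases b <;>
    simp only [act, Bool.false_eq_true, reduceIte, Prod.fst_add, Prod.snd_add] at h2 h3 ⊢ <;>
    linarith

theorem GridIso.exists_act {f : Plane ≃ᵢ Plane} (hf : GridIso f) :
    ∃ g v, ∀ c, f '' cell c = cell (act g c + v) := by
  choose φ hφ using hf
  obtain ⟨g, v, h⟩ := exists_act_of_isometry (φ := φ) fun c d => by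
    have h1 := dist_center_sq (φ c) (φ d)
    rw [← map_center (hφ c), ← map_center (hφ d), f.dist_eq, dist_center_sq] at h1
    exact_mod_cast h1.symm
  exact ⟨g, v, fun c => by rw [hφ, h]⟩

/-! ### Surrounds and good families -/

theorem image_realize {f : Plane ≃ᵢ Plane} {φ : ℤ × ℤ → ℤ × ℤ}
    (h : ∀ c, f '' cell c = cell (φ c)) (P : Finset (ℤ × ℤ)) :
    f '' realize P = realize (P.image φ) := by
  simp only [realize, image_iUnion, h, Finset.set_biUnion_finset_image]

theorem mem_cands {L a : List (ℤ × ℤ)} : a ∈ cands L ↔ ∃ g, ∃ c ∈ L, ∃ n ∈ nbrs L,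
    a = L.map fun x => act g x + (n - act g c) := by
  simp only [cands, List.mem_flatMap, List.mem_map, mem_syms, true_and]
  simp only [eq_comm]

/-- Surrounds amount to good families of candidates. From a good family one takes the realizations of
its members; from a surround one takes the candidates whose realization belongs to it. -/
theorem hasSurround_iff {P : Finset (ℤ × ℤ)} {L : List (ℤ × ℤ)} (hL : ∀ x, x ∈ L ↔ x ∈ P) :
    HasSurround P ↔ ∃ F ∈ (cands L).sublists', Good L F := by
  have hPimg : ∀ φ : ℤ × ℤ → ℤ × ℤ, (L.map φ).toFinset = P.image φ := by
    intro φ; ext x; simp [hL]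
  constructor
  · rintro ⟨Q, hfin, hcopy, hdisj, hpair, hcov, -⟩
    have hform : ∀ q ∈ Q, ∃ g v, q = realize (P.image fun c => act g c + v) := by
      intro q hq
      obtain ⟨f, hf, rfl⟩ := hcopy q hq
      obtain ⟨g, v, h⟩ := hf.exists_act
      exact ⟨g, v, image_realize h P⟩
    classical
    refine ⟨(cands L).filter fun a => realize a.toFinset ∈ Q,
      List.mem_sublists'.2 List.filter_sublist, ?_, ?_, ?_⟩
    · intro a ha x hx
      simp only [List.mem_filter, decide_eq_true_eq] at ha
      rw [hL]
      exact interior_realize_inter_eq_empty.1 (hdisj _ ha.2) x (by simpa using hx)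
    · rintro a ha b hb ⟨x, hxa, hxb⟩
      simp only [List.mem_filter, decide_eq_true_eq] at ha hb
      have hab : realize a.toFinset = realize b.toFinset := by
        by_contra hne
        exact interior_realize_inter_eq_empty.1 (hpair _ ha.2 _ hb.2 hne) x (by simpa using hxa)
          (by simpa using hxb)
      intro y hy
      have := realize_injective hab
      rw [← List.mem_toFinset, ← this]
      simpa using hy
    · intro n hn
      choose! G V hGV using hform
      let B : Finset (ℤ × ℤ) :=
        P ∪ hfin.toFinset.biUnion fun q => P.image fun c => act (G q) c + V q
      have hB : realize P ∪ ⋃₀ Q = realize B := by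
        ext p
        simp only [mem_union, mem_sUnion, mem_realize, B, Finset.mem_union, Finset.mem_biUnion,
          Finite.mem_toFinset]
        constructor
        · rintro (⟨c, hc, hp⟩ | ⟨q, hq, hp⟩)
          · exact ⟨c, Or.inl hc, hp⟩
          · rw [hGV q hq, mem_realize] at hp
            obtain ⟨c, hc, hp⟩ := hp
            exact ⟨c, Or.inr ⟨q, hq, hc⟩, hp⟩
        · rintro ⟨c, hc | ⟨q, hq, hc⟩, hp⟩
          · exact Or.inl ⟨c, hc, hp⟩
          · refine Or.inr ⟨q, hq, ?_⟩
            rw [hGV q hq]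
            exact cell_subset_realize hc hp
      rw [hB, realize_subset_interior_iff] at hcov
      obtain ⟨c, hc, hnc⟩ := mem_nbrs.1 hn
      have hnB := hcov c ((hL c).1 hc) n hnc
      simp only [B, Finset.mem_union, Finset.mem_biUnion, Finite.mem_toFinset] at hnB
      rcases hnB with h | ⟨q, hq, h⟩
      · exact Or.inl ((hL n).2 h)
      · obtain ⟨d, hd, hdn⟩ := Finset.mem_image.1 h
        have hV : V q = n - act (G q) d := by rw [← hdn]; simp
        refine Or.inr ⟨L.map fun x => act (G q) x + (n - act (G q) d), ?_, ?_⟩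
        · simp only [List.mem_filter, decide_eq_true_eq]
          refine ⟨mem_cands.2 ⟨_, d, (hL d).2 hd, n, hn, rfl⟩, ?_⟩
          rw [hPimg, ← hV, ← hGV q hq]
          exact hq
        · exact List.mem_map.2 ⟨d, (hL d).2 hd, by simp⟩
  · rintro ⟨F, hF, hav, hcomp, hcov⟩
    have hFc : ∀ a ∈ F, a ∈ cands L := fun a ha => (List.mem_sublists'.1 hF).subset ha
    have hdisj : ∀ a ∈ F, ∀ x ∈ a.toFinset, x ∉ P := by
      intro a ha x hx
      rw [← hL]
      exact hav a ha x (by simpa using hx)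
    refine ⟨(fun a : List (ℤ × ℤ) => realize a.toFinset) '' {a | a ∈ F},
      F.finite_toSet.image _, ?_, ?_, ?_, ?_, ?_⟩
    · rintro _ ⟨a, ha, rfl⟩
      obtain ⟨g, c, hc, n, hn, rfl⟩ := mem_cands.1 (hFc a ha)
      obtain ⟨f, hf, h⟩ := exists_gridIso g (n - act g c)
      exact ⟨f, hf, by simp only [hPimg, image_realize h]⟩
    · rintro _ ⟨a, ha, rfl⟩
      exact interior_realize_inter_eq_empty.2 (hdisj a ha)
    · rintro _ ⟨a, ha, rfl⟩ _ ⟨b, hb, rfl⟩ hne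
      refine interior_realize_inter_eq_empty.2 fun x hxa hxb => hne ?_
      rw [List.mem_toFinset] at hxa hxb
      have : a.toFinset = b.toFinset := by
        ext y
        rw [List.mem_toFinset, List.mem_toFinset]
        exact ⟨hcomp a ha b hb ⟨x, hxa, hxb⟩ y, hcomp b hb a ha ⟨x, hxb, hxa⟩ y⟩
      simp only [this]
    · have hsub : realize (P ∪ F.toFinset.biUnion List.toFinset) ⊆
          realize P ∪ ⋃₀ ((fun a : List (ℤ × ℤ) => realize a.toFinset) '' {a | a ∈ F}) := by
        intro p hp
        obtain ⟨c, hc, hpc⟩ := mem_realize.1 hp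
        simp only [Finset.mem_union, Finset.mem_biUnion, List.mem_toFinset] at hc
        rcases hc with hc | ⟨a, ha, hc⟩
        · exact Or.inl (cell_subset_realize hc hpc)
        · exact Or.inr ⟨_, ⟨a, ha, rfl⟩, cell_subset_realize (by simpa using hc) hpc⟩
      refine subset_trans (realize_subset_interior_iff.2 fun c hc n hn => ?_)
        (interior_mono hsub)
      simp only [Finset.mem_union, Finset.mem_biUnion, List.mem_toFinset]
      rcases hcov n (mem_nbrs.2 ⟨c, (hL c).2 hc, hn⟩) with h | h
      · exact Or.inl ((hL n).1 h)
      · exact Or.inr h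
    · rintro _ ⟨a, ha, rfl⟩
      obtain ⟨g, c, hc, n, hn, hag⟩ := mem_cands.1 (hFc a ha)
      obtain ⟨d, hd, hnd⟩ := mem_nbrs.1 hn
      refine frontier_inter_nonempty (hdisj a ha) ((hL d).1 hd) (n := n) ?_ hnd
      rw [List.mem_toFinset, hag]
      exact List.mem_map.2 ⟨c, hc, by simp⟩

/-! ### Decidability -/

/-- surroundability of polyominoes is decidable: there is a computable
function deciding, for each polyomino, whether a surround exists. -/
theorem surroundability_decidable :
    ∃ f : Finset (ℤ × ℤ) → Bool, Computable f ∧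
      ∀ P : Finset (ℤ × ℤ), IsPolyomino P → (f P = true ↔ HasSurround P) := by
  obtain ⟨hdec, hprim⟩ := primrecPred_search
  refine ⟨_, hprim.to_comp, fun P _ => ?_⟩
  rw [hasSurround_iff (mem_cellList P), decide_eq_true_eq]
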